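/- Let x ∈ ℂ \ ℝ₋ and suppose c^{(h)} ∈ ℂ satisfies c^{(h)} → c as h → 0⁺. Then for every k ∈ ℕ, the functions l_c^{(k,h)}(x) := (1/k!) · ∂^k/∂c'^k |_{c'=c^{(h)}} [h^{c'} Γ(x/h)/Γ(x/h - c')] converge to x^c · (log x)^k / k! as h → 0⁺. -/

import Mathlib

open Filter Topology

/-!
Write `q c z = Γ(z) / (Γ(z - c) z ^ c)`, so that
`h ^ c Γ(x / h) / Γ(x / h - c) = x ^ c q c (x / h)`. The functional equation of `Γ` gives
`q c z = exp (E z) q c (z + 1)` with `E z = c log (1 + 1 / z) + log (1 - c / z) = O(|z| ^ (-2))`,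
and Euler's limit formula gives `q c (z + n) → 1`; hence `q c z = exp (∑ E (z + j))`.
For `|arg z| ≤ θ < π` one has `|z + j| ≥ cos (θ / 2) (|z| + j)`, so the sum is `O(1 / |z|)`
uniformly for `c` in a bounded set. Thus `h ^ c Γ(x / h) / Γ(x / h - c) → x ^ c` locally uniformly
in `c`. By the Weierstrass convergence theorem the same holds for all derivatives in `c`, and
locally uniform convergence to a continuous limit permits evaluation at the
moving point `c^{(h)}`.
-/

open Bornology Complex

lemma cos_half_mul_le_norm_add_ofReal {z : ℂ} {θ t : ℝ} (hz : |z.arg| ≤ θ) (hθ : θ ≤ Real.pi)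
    (ht : 0 ≤ t) : Real.cos (θ / 2) * (‖z‖ + t) ≤ ‖z + t‖ := by
  have hre : ‖z‖ * Real.cos θ ≤ z.re := by
    rw [← norm_mul_cos_arg, ← Real.cos_abs z.arg]
    gcongr
    exact Real.cos_le_cos_of_nonneg_of_le_pi (abs_nonneg _) hθ hz
  have hnorm : ‖z + t‖ ^ 2 = ‖z‖ ^ 2 + 2 * z.re * t + t ^ 2 := by
    simp only [Complex.sq_norm, normSq_apply, add_re, add_im, ofReal_re, ofReal_im]
    ring
  refine abs_le_of_sq_le_sq' ?_ (norm_nonneg _) |>.2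
  calc (Real.cos (θ / 2) * (‖z‖ + t)) ^ 2
      = (1 + Real.cos θ) / 2 * (‖z‖ + t) ^ 2 := by
        rw [mul_pow, Real.cos_sq, mul_div_cancel₀ _ two_ne_zero]; ring
    _ = ‖z‖ ^ 2 + 2 * (‖z‖ * Real.cos θ) * t + t ^ 2
          - (1 - Real.cos θ) / 2 * (‖z‖ - t) ^ 2 := by ring
    _ ≤ ‖z‖ ^ 2 + 2 * z.re * t + t ^ 2 - 0 := by
        have hcos := Real.cos_le_one θ
        gcongr
        exact mul_nonneg (by linarith) (sq_nonneg _)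
    _ = ‖z + t‖ ^ 2 := by rw [hnorm, sub_zero]

lemma sum_inv_add_natCast_sq_le {r : ℝ} (hr : 1 < r) (n : ℕ) :
    ∑ j ∈ Finset.range n, ((r + j) ^ 2)⁻¹ ≤ (r - 1)⁻¹ := by
  have hpos (j : ℕ) : 0 < r - 1 + j := by linarith [j.cast_nonneg (α := ℝ)]
  calc ∑ j ∈ Finset.range n, ((r + j) ^ 2)⁻¹
      ≤ ∑ j ∈ Finset.range n, ((r - 1 + j)⁻¹ - (r - 1 + (j + 1 : ℕ))⁻¹) := by
        refine Finset.sum_le_sum fun j _ ↦ ?_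
        have hj := hpos j
        have hcast : r - 1 + (j + 1 : ℕ) = r + j := by push_cast; ring
        have hsucc : 0 < r + j := hcast ▸ hpos (j + 1)
        rw [hcast, inv_sub_inv hj.ne' hsucc.ne', inv_eq_one_div,
          div_le_div_iff₀ (by positivity) (by positivity)]
        nlinarith
    _ = (r - 1)⁻¹ - (r - 1 + n)⁻¹ := by
        rw [Finset.sum_range_sub' fun j : ℕ ↦ (r - 1 + j)⁻¹, Nat.cast_zero, add_zero]
    _ ≤ (r - 1)⁻¹ := sub_le_self _ (inv_nonneg.2 (hpos n).le)

-- `1 + z⁻¹` has positive real part and argument of sign opposite to that of `z`, so the sum of the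
-- two arguments stays in `(-π, π]`.
lemma log_add_one {z : ℂ} (hz : 1 < ‖z‖) : log (z + 1) = log z + log (1 + z⁻¹) := by
  have hz0 : z ≠ 0 := norm_pos_iff.1 (one_pos.trans hz)
  have hre : 0 < (1 + z⁻¹).re := by
    have hle : |z⁻¹.re| < 1 := (abs_re_le_norm _).trans_lt (by
      rw [norm_inv]; exact inv_lt_one_of_one_lt₀ hz)
    rw [add_re, one_re]
    linarith [(abs_lt.1 hle).1]
  have hw0 : 1 + z⁻¹ ≠ 0 := fun h ↦ by simp [h] at hre
  have him : (1 + z⁻¹).im = -z.im / normSq z := by simp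
  have hw := abs_lt.1 (abs_arg_lt_pi_div_two_iff.2 (.inl hre))
  rw [show z + 1 = z * (1 + z⁻¹) by field_simp, log_mul_eq_add_log_iff hz0 hw0]
  rcases lt_or_ge z.im 0 with hneg | hnonneg
  · have harg : 0 ≤ (1 + z⁻¹).arg := by
      rw [arg_nonneg_iff, him]
      exact div_nonneg (neg_nonneg.2 hneg.le) (normSq_nonneg _)
    constructor <;> linarith [neg_pi_lt_arg z, arg_neg_iff.2 hneg, hw.2]
  · have harg : (1 + z⁻¹).arg ≤ 0 := by
      rcases hnonneg.eq_or_lt with hzero | hpos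
      · rw [arg_eq_zero_iff.2 ⟨hre.le, by simp [him, ← hzero]⟩]
      · refine (arg_neg_iff.2 ?_).le
        rw [him]
        exact div_neg_of_neg_of_pos (neg_lt_zero.2 hpos) (normSq_pos.2 hz0)
    constructor <;> linarith [arg_le_pi z, arg_nonneg_iff.2 hnonneg, hw.1, Real.pi_pos]

lemma norm_log_one_add_sub_self_le_sq {u : ℂ} (hu : ‖u‖ ≤ 1 / 2) :
    ‖log (1 + u) - u‖ ≤ ‖u‖ ^ 2 := by
  have hinv : (1 - ‖u‖)⁻¹ ≤ 2 := inv_le_of_inv_le₀ two_pos (by linarith)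
  calc ‖log (1 + u) - u‖ ≤ ‖u‖ ^ 2 * (1 - ‖u‖)⁻¹ / 2 :=
        norm_log_one_add_sub_self_le (by linarith)
    _ ≤ ‖u‖ ^ 2 * 2 / 2 := by gcongr
    _ = ‖u‖ ^ 2 := by ring

lemma ofReal_mul_cpow {r : ℝ} (hr : 0 < r) (z c : ℂ) : (r * z) ^ c = r ^ c * z ^ c := by
  have hr0 : (r : ℂ) ≠ 0 := ofReal_ne_zero.2 hr.ne'
  rcases eq_or_ne z 0 with rfl | hz
  · rcases eq_or_ne c 0 with rfl | hc <;> simp [*]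
  · rw [cpow_def_of_ne_zero (mul_ne_zero hr0 hz), cpow_def_of_ne_zero hr0, cpow_def_of_ne_zero hz,
      ← exp_add, ← add_mul, log_ofReal_mul hr hz, ofReal_log hr.le]

lemma tendsto_add_natCast_cpow_div_natCast_cpow (z c : ℂ) :
    Tendsto (fun n : ℕ ↦ (z + n) ^ c / (n : ℂ) ^ c) atTop (𝓝 1) := by
  have hbase : Tendsto (fun n : ℕ ↦ 1 + z / n) atTop (𝓝 1) := by
    simpa using (tendsto_const_div_atTop_nhds_zero_nat z).const_add 1
  have hpow : Tendsto (fun n : ℕ ↦ (1 + z / n) ^ c) atTop (𝓝 1) := by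
    simpa using hbase.cpow (tendsto_const_nhds (x := c)) one_mem_slitPlane
  refine hpow.congr' ?_
  filter_upwards [eventually_gt_atTop 0] with n hn
  have hn0 : (n : ℂ) ≠ 0 := Nat.cast_ne_zero.2 hn.ne'
  have hfactor : z + n = (n : ℝ) * (1 + z / n) := by
    rw [ofReal_natCast]
    field_simp
    ring
  have hmul := ofReal_mul_cpow (Nat.cast_pos.2 hn) (1 + z / n) c
  rw [hfactor, hmul, ofReal_natCast, mul_div_cancel_left₀ _ (by simp [cpow_eq_zero_iff, hn0])]

lemma Gamma_add_natCast {z : ℂ} (hz : ∀ m : ℕ, z ≠ -m) (n : ℕ) :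
    Gamma (z + n) = Gamma z * ∏ j ∈ Finset.range n, (z + j) := by
  induction n with
  | zero => simp
  | succ n ih =>
    rw [Nat.cast_succ, ← add_assoc, Gamma_add_one _ fun h ↦ hz n (eq_neg_of_add_eq_zero_left h), ih,
      Finset.prod_range_succ]
    ring

lemma tendsto_Gamma_add_natCast_div {z : ℂ} (hz : ∀ m : ℕ, z ≠ -m) :
    Tendsto (fun n : ℕ ↦ Gamma (z + (n + 1 : ℕ)) / ((n : ℂ) ^ z * n.factorial)) atTop (𝓝 1) := by
  have hΓ := Gamma_ne_zero hz
  have hlim : Tendsto (fun n ↦ Gamma z / GammaSeq z n) atTop (𝓝 1) := by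
    have hdiv := (tendsto_const_nhds (x := Gamma z)).div (GammaSeq_tendsto_Gamma z) hΓ
    rwa [div_self hΓ] at hdiv
  refine hlim.congr fun n ↦ ?_
  rw [Gamma_add_natCast hz, GammaSeq, div_div_eq_mul_div]

/-- The quotient `Γ(z) / (Γ(z - c) z ^ c)`, which tends to `1` as `z → ∞` in any sector
`|arg z| ≤ θ < π`. Mathlib's `Gamma` is `0` at its poles, so the quotient is `0` where `z` or
`z - c` is a nonpositive integer; for `z - c` this agrees with `1 / Γ` being entire. -/
noncomputable def gammaQuotient (c z : ℂ) : ℂ :=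
  Gamma z / (Gamma (z - c) * z ^ c)

/-- A logarithm of `gammaQuotient c z / gammaQuotient c (z + 1)`, written so that the terms of order
`1 / z` cancel: it is `O(|z| ^ (-2))`, hence summable along `z, z + 1, z + 2, …`. -/
noncomputable def gammaQuotientLogStep (c z : ℂ) : ℂ :=
  c * log (1 + z⁻¹) + log (1 - c / z)

section gammaQuotient

variable {c z : ℂ}

lemma tendsto_gammaQuotient_add_natCast (hz : ∀ m : ℕ, z ≠ -m) (hzc : ∀ m : ℕ, z - c ≠ -m) :
    Tendsto (fun n : ℕ ↦ gammaQuotient c (z + n)) atTop (𝓝 1) := by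
  rw [← tendsto_add_atTop_iff_nat 1]
  have hpow : Tendsto (fun n : ℕ ↦ (z + (n + 1 : ℕ)) ^ c / (n : ℂ) ^ c) atTop (𝓝 1) := by
    refine (tendsto_add_natCast_cpow_div_natCast_cpow (z + 1) c).congr fun n ↦ ?_
    rw [Nat.cast_succ, add_right_comm, add_assoc]
  have hlim := ((tendsto_Gamma_add_natCast_div hz).div
    (tendsto_Gamma_add_natCast_div hzc) one_ne_zero).div hpow one_ne_zero
  rw [div_one, div_one] at hlim
  refine hlim.congr' ?_
  filter_upwards [eventually_gt_atTop 0] with n hn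
  have hn0 : (n : ℂ) ≠ 0 := Nat.cast_ne_zero.2 hn.ne'
  have hfac : (n.factorial : ℂ) ≠ 0 := Nat.cast_ne_zero.2 n.factorial_ne_zero
  have hpow_ne (s : ℂ) : (n : ℂ) ^ s ≠ 0 := by simp [cpow_eq_zero_iff, hn0]
  have hsplit : (n : ℂ) ^ z = (n : ℂ) ^ (z - c) * (n : ℂ) ^ c := by
    rw [← cpow_add _ _ hn0, sub_add_cancel]
  have hc := hpow_ne c
  have hd := hpow_ne (z - c)
  simp only [Pi.div_apply]
  rw [gammaQuotient, hsplit, add_sub_right_comm]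
  field_simp

lemma gammaQuotient_eq_exp_logStep_mul (hz : 1 < ‖z‖) (hzc : z ≠ c) :
    gammaQuotient c z = exp (gammaQuotientLogStep c z) * gammaQuotient c (z + 1) := by
  have hz0 : z ≠ 0 := norm_pos_iff.1 (one_pos.trans hz)
  have hz1 : z + 1 ≠ 0 := fun h ↦ by simp [eq_neg_of_add_eq_zero_left h] at hz
  have hzc0 : z - c ≠ 0 := sub_ne_zero.2 hzc
  have hstep : exp (gammaQuotientLogStep c z) = (z + 1) ^ c / z ^ c * ((z - c) / z) := by
    rw [gammaQuotientLogStep, exp_add, exp_log, cpow_def_of_ne_zero hz1, cpow_def_of_ne_zero hz0,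
      ← exp_sub, log_add_one hz, one_sub_div hz0]
    · congr 2; ring
    · rw [one_sub_div hz0]
      exact div_ne_zero hzc0 hz0
  have hpow : (z + 1) ^ c ≠ 0 := by simp [cpow_eq_zero_iff, hz1]
  rw [hstep, gammaQuotient, gammaQuotient, Gamma_add_one z hz0, add_sub_right_comm,
    Gamma_add_one _ hzc0]
  field_simp

lemma gammaQuotient_eq_exp_sum_mul (hz : ∀ j : ℕ, 1 < ‖z + j‖) (hzc : ∀ j : ℕ, z + j ≠ c) (n : ℕ) :
    gammaQuotient c z =
      exp (∑ j ∈ Finset.range n, gammaQuotientLogStep c (z + j)) * gammaQuotient c (z + n) := by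
  induction n with
  | zero => simp
  | succ n ih =>
    rw [ih, gammaQuotient_eq_exp_logStep_mul (hz n) (hzc n), Finset.sum_range_succ, exp_add,
      Nat.cast_succ, add_assoc z, mul_assoc]

lemma norm_gammaQuotientLogStep_le (hz : 2 ≤ ‖z‖) (hc : 2 * ‖c‖ ≤ ‖z‖) :
    ‖gammaQuotientLogStep c z‖ ≤ (‖c‖ + ‖c‖ ^ 2) * (‖z‖ ^ 2)⁻¹ := by
  have hz0 : 0 < ‖z‖ := by linarith
  have hinv : ‖z⁻¹‖ ≤ 1 / 2 := by
    rw [norm_inv, ← one_div]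
    exact one_div_le_one_div_of_le two_pos hz
  have hdiv : ‖-(c / z)‖ ≤ 1 / 2 := by
    rw [norm_neg, norm_div, div_le_div_iff₀ hz0 two_pos]
    linarith
  calc ‖gammaQuotientLogStep c z‖
      = ‖c * (log (1 + z⁻¹) - z⁻¹) + (log (1 + -(c / z)) - -(c / z))‖ := by
        rw [gammaQuotientLogStep]
        ring_nf
    _ ≤ ‖c‖ * ‖z⁻¹‖ ^ 2 + ‖-(c / z)‖ ^ 2 := by
        refine norm_add_le_of_le ?_ (norm_log_one_add_sub_self_le_sq hdiv)
        rw [norm_mul]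
        gcongr
        exact norm_log_one_add_sub_self_le_sq hinv
    _ = (‖c‖ + ‖c‖ ^ 2) * (‖z‖ ^ 2)⁻¹ := by
        rw [norm_neg, norm_div, norm_inv]
        ring

lemma tendsto_exp_sum_gammaQuotientLogStep (hz : ∀ j : ℕ, 1 < ‖z + j‖) (hzc : ∀ j : ℕ, z + j ≠ c) :
    Tendsto (fun n ↦ exp (∑ j ∈ Finset.range n, gammaQuotientLogStep c (z + j))) atTop
      (𝓝 (gammaQuotient c z)) := by
  have hone : Tendsto (fun n : ℕ ↦ gammaQuotient c (z + n)) atTop (𝓝 1) := by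
    refine tendsto_gammaQuotient_add_natCast (fun m h ↦ ?_) fun m h ↦ hzc m ?_
    · simpa [h] using (hz m).trans' one_pos
    · linear_combination h
  have hdiv := (tendsto_const_nhds (x := gammaQuotient c z)).div hone one_ne_zero
  rw [div_one] at hdiv
  refine hdiv.congr' ?_
  filter_upwards [hone.eventually_ne one_ne_zero] with n hn
  rw [Pi.div_apply, gammaQuotient_eq_exp_sum_mul hz hzc n, mul_div_cancel_right₀ _ hn]

lemma norm_sum_gammaQuotientLogStep_le {κ : ℝ} (hκ : 0 < κ)
    (hsector : ∀ j : ℕ, κ * (‖z‖ + j) ≤ ‖z + j‖) (hz₁ : 1 < ‖z‖) (hz : 2 ≤ κ * ‖z‖)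
    (hc : 2 * ‖c‖ ≤ κ * ‖z‖) (n : ℕ) :
    ‖∑ j ∈ Finset.range n, gammaQuotientLogStep c (z + j)‖ ≤
      (‖c‖ + ‖c‖ ^ 2) * ((κ ^ 2)⁻¹ * (‖z‖ - 1)⁻¹) := by
  have hle (j : ℕ) : κ * ‖z‖ ≤ ‖z + j‖ := (hsector j).trans' (by gcongr; simp)
  calc ‖∑ j ∈ Finset.range n, gammaQuotientLogStep c (z + j)‖
      ≤ ∑ j ∈ Finset.range n, (‖c‖ + ‖c‖ ^ 2) * ((κ ^ 2)⁻¹ * ((‖z‖ + j) ^ 2)⁻¹) := by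
        refine norm_sum_le_of_le _ fun j _ ↦
          (norm_gammaQuotientLogStep_le (hz.trans (hle j)) (hc.trans (hle j))).trans ?_
        rw [← mul_inv, ← mul_pow]
        have : 0 < κ * (‖z‖ + j) := by positivity
        gcongr
        exact hsector j
    _ ≤ (‖c‖ + ‖c‖ ^ 2) * ((κ ^ 2)⁻¹ * (‖z‖ - 1)⁻¹) := by
        rw [← Finset.mul_sum, ← Finset.mul_sum]
        gcongr
        exact sum_inv_add_natCast_sq_le hz₁ n

lemma norm_gammaQuotient_sub_one_le {κ : ℝ} (hκ : 0 < κ)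
    (hsector : ∀ j : ℕ, κ * (‖z‖ + j) ≤ ‖z + j‖) (hz : 2 ≤ κ * ‖z‖) (hc : 2 * ‖c‖ ≤ κ * ‖z‖) :
    ‖gammaQuotient c z - 1‖ ≤
      Real.exp ((‖c‖ + ‖c‖ ^ 2) * ((κ ^ 2)⁻¹ * (‖z‖ - 1)⁻¹)) - 1 := by
  have hle (j : ℕ) : κ * ‖z‖ ≤ ‖z + j‖ := (hsector j).trans' (by gcongr; simp)
  have hz₁ (j : ℕ) : 1 < ‖z + j‖ := one_lt_two.trans_le (hz.trans (hle j))
  have hzc (j : ℕ) : z + j ≠ c := fun h ↦ by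
    have hj := hle j
    rw [h] at hj
    linarith
  have hbound (n : ℕ) : ‖exp (∑ j ∈ Finset.range n, gammaQuotientLogStep c (z + j)) - 1‖ ≤
      Real.exp ((‖c‖ + ‖c‖ ^ 2) * ((κ ^ 2)⁻¹ * (‖z‖ - 1)⁻¹)) - 1 := by
    have hexp := norm_exp_sub_sum_le_exp_norm_sub_sum
      (∑ j ∈ Finset.range n, gammaQuotientLogStep c (z + j)) 1
    simp only [Finset.sum_range_one, pow_zero, Nat.factorial_zero, Nat.cast_one, div_one] at hexp
    refine hexp.trans ?_
    gcongr
    exact norm_sum_gammaQuotientLogStep_le hκ hsector (by simpa using hz₁ 0) hz hc n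
  exact le_of_tendsto ((tendsto_exp_sum_gammaQuotientLogStep hz₁ hzc).sub_const 1).norm
    (.of_forall hbound)

end gammaQuotient

theorem tendstoUniformlyOn_gammaQuotient {θ : ℝ} (hθ₀ : 0 ≤ θ) (hθ : θ < Real.pi) {K : Set ℂ}
    (hK : IsBounded K) :
    TendstoUniformlyOn (fun z c ↦ gammaQuotient c z) 1 (cobounded ℂ ⊓ 𝓟 {z | |z.arg| ≤ θ}) K := by
  obtain ⟨R, _, hKR⟩ := hK.exists_pos_norm_le
  set κ := Real.cos (θ / 2)
  have hκ : 0 < κ := Real.cos_pos_of_mem_Ioo ⟨by linarith [Real.pi_pos], by linarith⟩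
  have hnorm : Tendsto (fun z : ℂ ↦ ‖z‖) (cobounded ℂ) atTop := tendsto_norm_cobounded_atTop
  have hbound : Tendsto
      (fun z : ℂ ↦ Real.exp ((R + R ^ 2) * ((κ ^ 2)⁻¹ * (‖z‖ - 1)⁻¹)) - 1) (cobounded ℂ) (𝓝 0) := by
    have hinv : Tendsto (fun z : ℂ ↦ (‖z‖ - 1)⁻¹) (cobounded ℂ) (𝓝 0) :=
      tendsto_inv_atTop_zero.comp (tendsto_atTop_add_const_right _ (-1) hnorm)
    simpa using ((hinv.const_mul (κ ^ 2)⁻¹).const_mul (R + R ^ 2)).rexp.sub_const 1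
  rw [Metric.tendstoUniformlyOn_iff]
  intro ε hε
  rw [eventually_inf_principal]
  filter_upwards [hbound.eventually_lt_const hε, hnorm.eventually_gt_atTop 1,
    (hnorm.const_mul_atTop hκ).eventually_ge_atTop 2,
    (hnorm.const_mul_atTop hκ).eventually_ge_atTop (2 * R)] with z hzε hz1 hz2 hzR harg c hc
  have hcR := hKR c hc
  have hsector (j : ℕ) : κ * (‖z‖ + j) ≤ ‖z + j‖ :=
    mod_cast cos_half_mul_le_norm_add_ofReal harg hθ.le j.cast_nonneg
  have := sub_pos.2 hz1
  rw [dist_comm, dist_eq, Pi.one_apply]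
  calc ‖gammaQuotient c z - 1‖
      ≤ Real.exp ((‖c‖ + ‖c‖ ^ 2) * ((κ ^ 2)⁻¹ * (‖z‖ - 1)⁻¹)) - 1 :=
        norm_gammaQuotient_sub_one_le hκ hsector hz2 (by linarith)
    _ ≤ Real.exp ((R + R ^ 2) * ((κ ^ 2)⁻¹ * (‖z‖ - 1)⁻¹)) - 1 := by gcongr
    _ < ε := hzε

lemma tendsto_div_ofReal_cobounded_inf_principal {x : ℂ} (hx : x ≠ 0) :
    Tendsto (fun h : ℝ ↦ x / h) (𝓝[>] 0) (cobounded ℂ ⊓ 𝓟 {z | |z.arg| ≤ |x.arg|}) := by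
  refine tendsto_inf.2 ⟨?_, tendsto_principal.2 ?_⟩
  · rw [← tendsto_norm_atTop_iff_cobounded]
    refine (tendsto_inv_nhdsGT_zero.const_mul_atTop (norm_pos_iff.2 hx)).congr' ?_
    filter_upwards [self_mem_nhdsWithin] with h hh
    rw [norm_div, norm_real, Real.norm_of_nonneg (le_of_lt hh), div_eq_mul_inv]
  · filter_upwards [self_mem_nhdsWithin] with h hh
    have harg : (x / h).arg = x.arg := by
      rw [div_eq_mul_inv, ← ofReal_inv, arg_mul_real (inv_pos.2 hh)]
    exact (congrArg _ harg).le

lemma cpow_mul_gammaQuotient_div {h : ℝ} (hh : 0 < h) {x : ℂ} (hx : x ≠ 0) (c : ℂ) :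
    x ^ c * gammaQuotient c (x / h) = (h : ℂ) ^ c * Gamma (x / h) / Gamma (x / h - c) := by
  have hh0 : (h : ℂ) ≠ 0 := ofReal_ne_zero.2 hh.ne'
  have hxh : (x / h) ^ c ≠ 0 := by simp [cpow_eq_zero_iff, hx, hh0]
  have hxc : x ^ c = (h : ℂ) ^ c * (x / h) ^ c := by
    rw [← ofReal_mul_cpow hh, mul_div_cancel₀ _ hh0]
  rw [gammaQuotient, hxc]
  field_simp

theorem tendstoLocallyUniformly_cpow_mul_Gamma_div_Gamma {x : ℂ} (hx : x ∈ slitPlane) :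
    TendstoLocallyUniformly
      (fun (h : ℝ) c ↦ (h : ℂ) ^ c * Gamma (x / h) / Gamma (x / h - c)) (fun c ↦ x ^ c)
      (𝓝[>] 0) := by
  have hx0 := slitPlane_ne_zero hx
  have harg : |x.arg| < Real.pi :=
    abs_lt.2 ⟨neg_pi_lt_arg x, (arg_le_pi x).lt_of_ne (mem_slitPlane_iff_arg.1 hx).1⟩
  have hquot : TendstoLocallyUniformly (fun (h : ℝ) c ↦ gammaQuotient c (x / h)) 1 (𝓝[>] 0) := by
    rw [tendstoLocallyUniformly_iff_forall_isCompact]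
    exact fun K hK u hu ↦ (tendsto_div_ofReal_cobounded_inf_principal hx0).eventually
      (tendstoUniformlyOn_gammaQuotient (abs_nonneg _) harg hK.isBounded u hu)
  have hconst : TendstoLocallyUniformly (fun (_ : ℝ) (c : ℂ) ↦ x ^ c) (fun c ↦ x ^ c) (𝓝[>] 0) :=
    fun u hu c ↦ ⟨Set.univ, univ_mem, .of_forall fun _ _ _ ↦ refl_mem_uniformity hu⟩
  have hprod := hconst.mul₀ hquot (continuous_id.const_cpow (.inl hx0)) continuous_one
  rw [tendstoLocallyUniformly_iff_forall_isCompact, mul_one] at hprod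
  rw [tendstoLocallyUniformly_iff_forall_isCompact]
  refine fun K hK ↦ (hprod K hK).congr ?_
  filter_upwards [self_mem_nhdsWithin] with h hh c _
  exact cpow_mul_gammaQuotient_div hh hx0 c

theorem tendstoLocallyUniformlyOn_iteratedDeriv {ι E : Type*} [NormedAddCommGroup E]
    [NormedSpace ℂ E] [CompleteSpace E] {l : Filter ι} {F : ι → ℂ → E} {f : ℂ → E} {U : Set ℂ}
    (hf : TendstoLocallyUniformlyOn F f l U) (hF : ∀ᶠ i in l, DifferentiableOn ℂ (F i) U)
    (hU : IsOpen U) (k : ℕ) :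
    TendstoLocallyUniformlyOn (fun i ↦ iteratedDeriv k (F i)) (iteratedDeriv k f) l U := by
  induction k generalizing F f with
  | zero => simpa only [iteratedDeriv_zero] using hf
  | succ k ih =>
    simp only [iteratedDeriv_succ']
    exact ih (hf.deriv hF hU) (hF.mono fun i hi ↦ hi.deriv hU)

lemma iteratedDeriv_const_cpow {x : ℂ} (hx : x ≠ 0) (k : ℕ) :
    iteratedDeriv k (fun c : ℂ ↦ x ^ c) = fun c ↦ log x ^ k * x ^ c := by
  simp only [cpow_def_of_ne_zero hx, iteratedDeriv_cexp_const_mul]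

lemma differentiable_const_cpow_mul_Gamma_quotient {a : ℂ} (ha : a ≠ 0) (z : ℂ) :
    Differentiable ℂ fun c ↦ a ^ c * Gamma z / Gamma (z - c) := by
  simp only [div_eq_mul_inv _ (Gamma _)]
  exact ((differentiable_id.const_cpow (.inl ha)).mul_const _).mul
    (differentiable_one_div_Gamma.comp (differentiable_id.const_sub z))

/-- Confluence of the logarithms: if `c^{(h)} → c` as `h → 0⁺` then
`l^{(k,h)}_{c^{(h)}}(x) → x^c (log x)^k / k!` for `x` off the closed negative real axis. -/
theorem logarithm_confluence_plus (x : ℂ) (hx : x ∈ Complex.slitPlane)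
    (c : ℂ) (ch : ℝ → ℂ)
    (hch : Tendsto ch (nhdsWithin (0 : ℝ) (Set.Ioi 0)) (nhds c)) (k : ℕ) :
    Tendsto
      (fun h : ℝ =>
        (1 / (k.factorial : ℂ)) *
          iteratedDeriv k
            (fun c' : ℂ => (h : ℂ) ^ c' * Complex.Gamma (x / h) / Complex.Gamma (x / h - c'))
            (ch h))
      (nhdsWithin (0 : ℝ) (Set.Ioi 0))
      (nhds (x ^ c * (Complex.log x) ^ k / (k.factorial : ℂ))) := by
  have hx0 := slitPlane_ne_zero hx
  have hholo : ∀ᶠ h : ℝ in 𝓝[>] 0, DifferentiableOn ℂ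
      (fun c' ↦ (h : ℂ) ^ c' * Gamma (x / h) / Gamma (x / h - c')) Set.univ := by
    filter_upwards [self_mem_nhdsWithin] with h hh
    exact (differentiable_const_cpow_mul_Gamma_quotient
      (ofReal_ne_zero.2 (ne_of_gt hh)) _).differentiableOn
  have hderiv := tendstoLocallyUniformlyOn_iteratedDeriv
    (tendstoLocallyUniformly_cpow_mul_Gamma_div_Gamma hx).tendstoLocallyUniformlyOn
    hholo isOpen_univ k
  rw [tendstoLocallyUniformlyOn_univ, iteratedDeriv_const_cpow hx0] at hderiv
  have hcont : Continuous fun c' : ℂ ↦ log x ^ k * x ^ c' :=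
    (continuous_id.const_cpow (.inl hx0)).const_mul _
  have hlim := hderiv.tendsto_comp hcont.continuousAt hch
  rw [show x ^ c * log x ^ k / k.factorial = 1 / k.factorial * (log x ^ k * x ^ c) by ring]
  exact hlim.const_mul _
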